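/- Let C be a bivariate copula with derivative family (h_v)_{v∈[0,1]}, with (v,t) ↦ h_v(t) jointly Lebesgue-measurable. Then 3 ∫₀¹ ∫₀¹ |h_v(t) − v| dt dv = 3 − 6 ∫₀¹ ∫₀¹ min(h_v(t), v) dt dv. Equivalently, the dependence measure ζ₁(C) = 3 ∫₀¹∫₀¹ |∂₂C(v,t) − v| dt dv satisfies ζ₁(C) = 1 − ψ(T(C)), where ψ(D) = 6 ∫₀¹ D(t,t) dt − 2 is Spearman's footrule and T(C)(v,u) = ∫₀¹ min(h_v(t), u) dt is the upper product transform of C. -/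

import Mathlib

open MeasureTheory Set

noncomputable section

/-- A bivariate copula: a function `[0,1]² → [0,1]` (encoded on `ℝ × ℝ`, with all
conditions imposed on `[0,1]²`) with the copula boundary conditions and the
2-increasing property. -/
def IsCopula (C : ℝ → ℝ → ℝ) : Prop :=
  (∀ v ∈ Icc (0:ℝ) 1, ∀ u ∈ Icc (0:ℝ) 1, C v u ∈ Icc (0:ℝ) 1) ∧
  (∀ v ∈ Icc (0:ℝ) 1, C v 0 = 0) ∧
  (∀ u ∈ Icc (0:ℝ) 1, C 0 u = 0) ∧
  (∀ v ∈ Icc (0:ℝ) 1, C v 1 = v) ∧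
  (∀ u ∈ Icc (0:ℝ) 1, C 1 u = u) ∧
  (∀ v₁ v₂ u₁ u₂ : ℝ, 0 ≤ v₁ → v₁ ≤ v₂ → v₂ ≤ 1 → 0 ≤ u₁ → u₁ ≤ u₂ → u₂ ≤ 1 →
    0 ≤ C v₂ u₂ - C v₁ u₂ - C v₂ u₁ + C v₁ u₁)

/-- A derivative family `(h_v)_{v ∈ [0,1]}` for a copula `C`:
each `h_v : [0,1] → [0,1]` is Lebesgue measurable, `C(v,u) = ∫₀ᵘ h_v(t) dt`,
`v ↦ h_v(t)` is increasing, and `∫₀¹ h_v(t) dt = v`. -/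
def IsDerivFamily (C : ℝ → ℝ → ℝ) (h : ℝ → ℝ → ℝ) : Prop :=
  (∀ v ∈ Icc (0:ℝ) 1, Measurable (h v)) ∧
  (∀ v ∈ Icc (0:ℝ) 1, ∀ t ∈ Icc (0:ℝ) 1, h v t ∈ Icc (0:ℝ) 1) ∧
  (∀ v ∈ Icc (0:ℝ) 1, ∀ u ∈ Icc (0:ℝ) 1, C v u = ∫ t in (0:ℝ)..u, h v t) ∧
  (∀ t ∈ Icc (0:ℝ) 1, MonotoneOn (fun v => h v t) (Icc (0:ℝ) 1)) ∧
  (∀ v ∈ Icc (0:ℝ) 1, (∫ t in (0:ℝ)..1, h v t) = v)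

/-!
Since `|a - b| = a + b - 2 min a b`, a random variable `h_v` with mean `v` satisfies
`∫ |h_v - v| = 2 v - 2 ∫ min h_v v`. Because `h_v` increases with `v`, so does
`∫ min h_v v`, which is therefore integrable over `v ∈ [0, 1]`; integrating the identity over `v`
gives the formula.
-/

section ProbabilitySpace

variable {Ω : Type*} [MeasurableSpace Ω] {μ : Measure Ω}

theorem integral_abs_sub_eq {f g : Ω → ℝ} (hf : Integrable f μ) (hg : Integrable g μ) :
    ∫ ω, |f ω - g ω| ∂μ = (∫ ω, f ω ∂μ) + (∫ ω, g ω ∂μ) - 2 * ∫ ω, min (f ω) (g ω) ∂μ := by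
  have abs_sub_eq (ω : Ω) : |f ω - g ω| = f ω + g ω - 2 * min (f ω) (g ω) := by
    linarith [max_sub_min_eq_abs' (f ω) (g ω), min_add_max (f ω) (g ω)]
  have add_integrable : Integrable (fun ω => f ω + g ω) μ := hf.add hg
  have min_integrable : Integrable (fun ω => min (f ω) (g ω)) μ := hf.inf hg
  calc ∫ ω, |f ω - g ω| ∂μ
      = ∫ ω, (f ω + g ω - 2 * min (f ω) (g ω)) ∂μ := by simp_rw [abs_sub_eq]
    _ = (∫ ω, f ω ∂μ) + (∫ ω, g ω ∂μ) - 2 * ∫ ω, min (f ω) (g ω) ∂μ := by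
      rw [integral_sub add_integrable (min_integrable.const_mul 2), integral_add hf hg,
        integral_const_mul]

theorem integral_abs_sub_integral_eq [IsProbabilityMeasure μ] {f : Ω → ℝ} (hf : Integrable f μ) :
    ∫ ω, |f ω - ∫ x, f x ∂μ| ∂μ
      = 2 * (∫ ω, f ω ∂μ) - 2 * ∫ ω, min (f ω) (∫ x, f x ∂μ) ∂μ := by
  rw [integral_abs_sub_eq hf (integrable_const _), integral_const, probReal_univ, one_smul,
    ← two_mul]

variable {h : ℝ → Ω → ℝ}

theorem monotoneOn_integral_min [IsFiniteMeasure μ] {s : Set ℝ}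
    (h_int : ∀ v ∈ s, Integrable (h v) μ)
    (h_mono : ∀ v ∈ s, ∀ w ∈ s, v ≤ w → h v ≤ᵐ[μ] h w) :
    MonotoneOn (fun v => ∫ ω, min (h v ω) v ∂μ) s := by
  intro v hv w hw hvw
  refine integral_mono_ae ((h_int v hv).inf (integrable_const v))
    ((h_int w hw).inf (integrable_const w)) ?_
  filter_upwards [h_mono v hv w hw hvw] with ω hω
  exact min_le_min hω hvw

variable [IsProbabilityMeasure μ]

theorem intervalIntegral_integral_abs_sub_eq {a b : ℝ}
    (h_int : ∀ v ∈ uIcc a b, Integrable (h v) μ)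
    (h_mean : ∀ v ∈ uIcc a b, ∫ ω, h v ω ∂μ = v)
    (h_mono : ∀ v ∈ uIcc a b, ∀ w ∈ uIcc a b, v ≤ w → h v ≤ᵐ[μ] h w) :
    ∫ v in a..b, ∫ ω, |h v ω - v| ∂μ
      = b ^ 2 - a ^ 2 - 2 * ∫ v in a..b, ∫ ω, min (h v ω) v ∂μ := by
  have inner_eq (v : ℝ) (hv : v ∈ uIcc a b) :
      ∫ ω, |h v ω - v| ∂μ = 2 * v - 2 * ∫ ω, min (h v ω) v ∂μ := by
    simpa only [h_mean v hv] using integral_abs_sub_integral_eq (h_int v hv)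
  have min_integrable : IntervalIntegrable (fun v => ∫ ω, min (h v ω) v ∂μ) volume a b :=
    (monotoneOn_integral_min h_int h_mono).intervalIntegrable
  have id_integrable : IntervalIntegrable (fun v : ℝ => v) volume a b :=
    intervalIntegral.intervalIntegrable_id
  rw [intervalIntegral.integral_congr inner_eq,
    intervalIntegral.integral_sub (id_integrable.const_mul 2) (min_integrable.const_mul 2),
    intervalIntegral.integral_const_mul, intervalIntegral.integral_const_mul, integral_id]
  ring

theorem zeta1_eq_one_sub_footrule_T_general
    (h_int : ∀ v ∈ Icc (0 : ℝ) 1, Integrable (h v) μ)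
    (h_mean : ∀ v ∈ Icc (0 : ℝ) 1, ∫ ω, h v ω ∂μ = v)
    (h_mono : ∀ v ∈ Icc (0 : ℝ) 1, ∀ w ∈ Icc (0 : ℝ) 1, v ≤ w → h v ≤ᵐ[μ] h w) :
    3 * (∫ v in (0 : ℝ)..1, ∫ ω, |h v ω - v| ∂μ)
      = 3 - 6 * ∫ v in (0 : ℝ)..1, ∫ ω, min (h v ω) v ∂μ := by
  rw [← uIcc_of_le zero_le_one] at h_int h_mean h_mono
  rw [intervalIntegral_integral_abs_sub_eq h_int h_mean h_mono]
  ring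

end ProbabilitySpace

instance isProbabilityMeasure_restrict_Ioc_zero_one :
    IsProbabilityMeasure (volume.restrict (Ioc (0 : ℝ) 1)) :=
  ⟨by simp⟩

namespace IsDerivFamily

variable {C h : ℝ → ℝ → ℝ} {v w : ℝ}

theorem integrableOn (hh : IsDerivFamily C h) (hv : v ∈ Icc (0 : ℝ) 1) :
    IntegrableOn (h v) (Ioc 0 1) := by
  obtain ⟨measurable, mem_Icc, -⟩ := hh
  refine Integrable.of_mem_Icc 0 1 (measurable v hv).aemeasurable ?_
  filter_upwards [ae_restrict_mem measurableSet_Ioc] with t ht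
  exact mem_Icc v hv t (Ioc_subset_Icc_self ht)

theorem setIntegral_eq (hh : IsDerivFamily C h) (hv : v ∈ Icc (0 : ℝ) 1) :
    ∫ t in Ioc (0 : ℝ) 1, h v t = v := by
  obtain ⟨-, -, -, -, integral_eq⟩ := hh
  rw [← intervalIntegral.integral_of_le zero_le_one, integral_eq v hv]

theorem ae_le (hh : IsDerivFamily C h) (hv : v ∈ Icc (0 : ℝ) 1) (hw : w ∈ Icc (0 : ℝ) 1)
    (hvw : v ≤ w) : h v ≤ᵐ[volume.restrict (Ioc 0 1)] h w := by
  obtain ⟨-, -, -, monotoneOn, -⟩ := hh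
  filter_upwards [ae_restrict_mem measurableSet_Ioc] with t ht
  exact monotoneOn t (Ioc_subset_Icc_self ht) hv hw hvw

end IsDerivFamily

/-- For a copula `C` with (jointly measurable) derivative
family `(h_v)`:
`3 ∫₀¹∫₀¹ |h_v(t) − v| dt dv = 3 − 6 ∫₀¹∫₀¹ min(h_v(t), v) dt dv`,
i.e. the dependence measure `ζ₁(C) = 3∫∫|∂₂C(v,t) − v| dt dv` satisfies
`ζ₁(C) = 1 − ψ(T(C))` where `ψ` is Spearman's footrule and `T` the upper
product transform. -/
theorem zeta1_eq_one_sub_footrule_T (C h : ℝ → ℝ → ℝ)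
    (hC : IsCopula C) (hh : IsDerivFamily C h)
    (hjoint : Measurable (Function.uncurry h)) :
    3 * (∫ v in (0:ℝ)..1, ∫ t in (0:ℝ)..1, |h v t - v|)
      = 3 - 6 * ∫ v in (0:ℝ)..1, ∫ t in (0:ℝ)..1, min (h v t) v := by
  simpa only [intervalIntegral.integral_of_le zero_le_one] using
    zeta1_eq_one_sub_footrule_T_general (fun _ => hh.integrableOn) (fun _ => hh.setIntegral_eq)
      (fun _ hv _ => hh.ae_le hv)

end
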